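/- arXiv:2012.12547 — 2 statements merged into one kernel-verified Lean document; each statement's English description precedes it below -/
import Mathlib

section
/- Let A be a linear relation in a complex vector space H, let λ ∈ ℂ, let k ≥ 0, and suppose x_0, …, x_k ∈ H form a chain (x_0,x_1), (x_1,x_2), …, (x_{k−1},x_k), (x_k,0) in A − λ (i.e., each listed pair belongs to A − λ). Set x_i = 0 for i > k and define z_m = Σ_{i=0}^{m} binom(m,i) λ^{m−i} x_i for m ≥ 0. Then (z_m, z_{m+1}) ∈ A for every m ≥ 0. -/
/-!
The proof rests on Pascal's rule, which gives
`z (m + 1) = ∑ i ≤ m, binom(m, i) λ ^ (m - i) • (x (i + 1) + λ • x i)` (`sum_choose_smul_succ`).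
Since `(x i, x (i + 1)) ∈ A - λ` means `(x i, x (i + 1) + λ • x i) ∈ A`, the pair
`(z m, z (m + 1))` is a linear combination of elements of `A`, with the coefficients
`binom(m, i) λ ^ (m - i)`.
-/

open Submodule Set

variable {H : Type*} [AddCommGroup H] [Module ℂ H]

/-- A linear relation in `H`: a linear subspace of the product `H × H`. -/
abbrev LinRel (H : Type*) [AddCommGroup H] [Module ℂ H] : Type _ := Submodule ℂ (H × H)

namespace LinRel

/-- The relation `A - λ = {(x, y - λ x) : (x,y) ∈ A}`. -/
def shift (A : LinRel H) (lam : ℂ) : LinRel H :=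
  A.map ((LinearMap.fst ℂ H H).prod (LinearMap.snd ℂ H H - lam • LinearMap.fst ℂ H H))

/-- The relation `λ A = {(x, λ y) : (x,y) ∈ A}`. -/
def smulRel (lam : ℂ) (A : LinRel H) : LinRel H :=
  A.map ((LinearMap.fst ℂ H H).prod (lam • LinearMap.snd ℂ H H))

/-- The inverse relation `A⁻¹ = {(y,x) : (x,y) ∈ A}`. -/
def inv (A : LinRel H) : LinRel H :=
  A.map ((LinearMap.snd ℂ H H).prod (LinearMap.fst ℂ H H))

/-- The product (composition) `A B = {(x,y) : ∃ z, (x,z) ∈ B ∧ (z,y) ∈ A}`. -/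
def comp (A B : LinRel H) : LinRel H where
  carrier := {p | ∃ z, (p.1, z) ∈ B ∧ (z, p.2) ∈ A}
  zero_mem' := ⟨0, B.zero_mem, A.zero_mem⟩
  add_mem' := by
    rintro p q ⟨z1, h1, h2⟩ ⟨z2, h3, h4⟩
    exact ⟨z1 + z2, B.add_mem h1 h3, A.add_mem h2 h4⟩
  smul_mem' := by
    rintro c p ⟨z, h1, h2⟩
    exact ⟨c • z, B.smul_mem c h1, A.smul_mem c h2⟩

/-- The identity relation `I = {(x,x) : x ∈ H}`. -/
def idRel : LinRel H := LinearMap.graph (LinearMap.id : H →ₗ[ℂ] H)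

/-- Powers: `A⁰ = I` and `Aᵏ = A · Aᵏ⁻¹`. -/
def pow (A : LinRel H) : ℕ → LinRel H
  | 0 => idRel
  | (k+1) => comp A (pow A k)

/-- The kernel `ker A = {x : (x,0) ∈ A}`. -/
def ker (A : LinRel H) : Submodule ℂ H := A.comap (LinearMap.inl ℂ H H)

/-- The multivalued part `mul A = {y : (0,y) ∈ A}`. -/
def mul (A : LinRel H) : Submodule ℂ H := A.comap (LinearMap.inr ℂ H H)

lemma mem_ker {A : LinRel H} {x : H} : x ∈ ker A ↔ (x, (0:H)) ∈ A := by
  simp [ker, Submodule.mem_comap]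

lemma mem_mul {A : LinRel H} {y : H} : y ∈ mul A ↔ ((0:H), y) ∈ A := by
  simp [mul, Submodule.mem_comap]

lemma ker_pow_le_succ (A : LinRel H) (i : ℕ) : ker (pow A i) ≤ ker (pow A (i+1)) := by
  intro x hx
  rw [mem_ker] at hx ⊢
  exact ⟨0, hx, A.zero_mem⟩

lemma ker_pow_mono (A : LinRel H) : Monotone fun i => ker (pow A i) :=
  monotone_nat_of_le_succ (ker_pow_le_succ A)

lemma mul_pow_le_succ (A : LinRel H) : ∀ i, mul (pow A i) ≤ mul (pow A (i+1)) := by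
  intro i
  induction i with
  | zero =>
    intro y hy
    rw [mem_mul] at hy ⊢
    have : y = 0 := by simpa [pow, idRel, LinearMap.mem_graph_iff] using hy
    subst this
    exact Submodule.zero_mem _
  | succ i ih =>
    intro y hy
    rw [mem_mul] at hy ⊢
    obtain ⟨w, hw, hwy⟩ := hy
    exact ⟨w, mem_mul.mp (ih (mem_mul.mpr hw)), hwy⟩

lemma mul_pow_mono (A : LinRel H) : Monotone fun i => mul (pow A i) :=
  monotone_nat_of_le_succ (mul_pow_le_succ A)

/-- The root space `R_λ(A) = ⋃_{i ≥ 1} ker (A - λ)ⁱ`. -/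
def rootSpace (A : LinRel H) (lam : ℂ) : Submodule ℂ H where
  carrier := ⋃ i : ℕ, (ker (pow (shift A lam) (i+1)) : Set H)
  zero_mem' := Set.mem_iUnion.2 ⟨0, Submodule.zero_mem _⟩
  add_mem' := by
    intro a b ha hb
    obtain ⟨i, hi⟩ := Set.mem_iUnion.1 ha
    obtain ⟨j, hj⟩ := Set.mem_iUnion.1 hb
    exact Set.mem_iUnion.2 ⟨max i j, Submodule.add_mem _
      (ker_pow_mono _ (by omega : i + 1 ≤ max i j + 1) hi)
      (ker_pow_mono _ (by omega : j + 1 ≤ max i j + 1) hj)⟩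
  smul_mem' := by
    intro c a ha
    obtain ⟨i, hi⟩ := Set.mem_iUnion.1 ha
    exact Set.mem_iUnion.2 ⟨i, Submodule.smul_mem _ c hi⟩

/-- The root space at infinity `R_∞(A) = ⋃_{i ≥ 1} mul Aⁱ`. -/
def rootInf (A : LinRel H) : Submodule ℂ H where
  carrier := ⋃ i : ℕ, (mul (pow A (i+1)) : Set H)
  zero_mem' := Set.mem_iUnion.2 ⟨0, Submodule.zero_mem _⟩
  add_mem' := by
    intro a b ha hb
    obtain ⟨i, hi⟩ := Set.mem_iUnion.1 ha
    obtain ⟨j, hj⟩ := Set.mem_iUnion.1 hb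
    exact Set.mem_iUnion.2 ⟨max i j, Submodule.add_mem _
      (mul_pow_mono _ (by omega : i + 1 ≤ max i j + 1) hi)
      (mul_pow_mono _ (by omega : j + 1 ≤ max i j + 1) hj)⟩
  smul_mem' := by
    intro c a ha
    obtain ⟨i, hi⟩ := Set.mem_iUnion.1 ha
    exact Set.mem_iUnion.2 ⟨i, Submodule.smul_mem _ c hi⟩

/-- The singular chain space `R_c(A) = R_0(A) ∩ R_∞(A)`. -/
def singChain (A : LinRel H) : Submodule ℂ H := rootSpace A 0 ⊓ rootInf A

/-- The root space at a point of `ℂ ∪ {∞}` (modelled as `Option ℂ`, with `none = ∞`). -/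
def rootSpaceE (A : LinRel H) : Option ℂ → Submodule ℂ H
  | none => rootInf A
  | some lam => rootSpace A lam

/-- `λ ∈ ℂ ∪ {∞}` is an eigenvalue of `A`. -/
def isEigenvalue (A : LinRel H) : Option ℂ → Prop
  | none => mul A ≠ ⊥
  | some lam => ker (shift A lam) ≠ ⊥

end LinRel

lemma LinRel.mem_shift {A : LinRel H} {lam : ℂ} {x y : H} :
    (x, y) ∈ LinRel.shift A lam ↔ (x, y + lam • x) ∈ A := by
  simp only [LinRel.shift, Submodule.mem_map]
  constructor
  · rintro ⟨⟨a, b⟩, hab, h⟩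
    obtain ⟨rfl, rfl⟩ := Prod.mk.inj h
    simpa using hab
  · intro h
    exact ⟨(x, y + lam • x), h, by simp⟩

/-- Pascal's rule for the binomial transform: passing from `m` to `m + 1` replaces each `x i` by
`x (i + 1) + λ • x i`. -/
lemma sum_choose_smul_succ (lam : ℂ) (x : ℕ → H) (m : ℕ) :
    ∑ i ∈ Finset.range (m + 1 + 1), (((m + 1).choose i : ℂ) * lam ^ (m + 1 - i)) • x i =
      ∑ i ∈ Finset.range (m + 1), ((m.choose i : ℂ) * lam ^ (m - i)) •
        (x (i + 1) + lam • x i) := by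
  -- The summand `i = m + 1` of the extended sum vanishes because `binom(m, m + 1) = 0`.
  have hlam : ∑ i ∈ Finset.range (m + 1), ((m.choose i : ℂ) * lam ^ (m - i)) • lam • x i =
      ∑ i ∈ Finset.range (m + 1 + 1), ((m.choose i : ℂ) * lam ^ (m + 1 - i)) • x i := by
    rw [Finset.sum_range_succ _ (m + 1), Nat.choose_succ_self]
    simp only [Nat.cast_zero, zero_mul, zero_smul, add_zero]
    refine Finset.sum_congr rfl fun i hi => ?_
    have him : m + 1 - i = m - i + 1 := by
      have := Finset.mem_range.1 hi
      omega
    rw [smul_smul, him, pow_succ, mul_assoc]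
  simp only [smul_add]
  rw [Finset.sum_add_distrib, hlam, Finset.sum_range_succ' _ (m + 1),
    Finset.sum_range_succ' _ (m + 1), ← add_assoc, ← Finset.sum_add_distrib]
  simp only [Nat.choose_succ_succ, Nat.cast_add, add_mul, add_smul, Nat.add_sub_add_right,
    Nat.choose_zero_right]

/-- transformation of a Jordan chain for `A - λ` (starting at `x 0`,
ending in the kernel) into an infinite chain for `A`. -/
theorem statement_1 (A : LinRel H) (lam : ℂ) (k : ℕ) (x z : ℕ → H)
    (hchain : ∀ i, i < k → (x i, x (i + 1)) ∈ LinRel.shift A lam)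
    (hlast : (x k, (0 : H)) ∈ LinRel.shift A lam)
    (hzero : ∀ i, k < i → x i = 0)
    (hz : ∀ m, z m = ∑ i ∈ Finset.range (m + 1),
      ((m.choose i : ℂ) * lam ^ (m - i)) • x i) :
    ∀ m, (z m, z (m + 1)) ∈ A := by
  have hx : ∀ i, (x i, x (i + 1) + lam • x i) ∈ A := by
    intro i
    rw [← LinRel.mem_shift]
    rcases lt_trichotomy i k with h | rfl | h
    · exact hchain i h
    · rw [hzero (i + 1) i.lt_succ_self]
      exact hlast
    · rw [hzero i h, hzero (i + 1) (by omega)]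
      exact Submodule.zero_mem _
  intro m
  have hsum : (z m, z (m + 1)) = ∑ i ∈ Finset.range (m + 1),
      ((m.choose i : ℂ) * lam ^ (m - i)) • (x i, x (i + 1) + lam • x i) := by
    ext
    · simp [Prod.fst_sum, hz m]
    · rw [hz (m + 1), sum_choose_smul_succ]
      simp only [Prod.snd_sum, Prod.smul_snd]
  rw [hsum]
  exact Submodule.sum_mem _ fun i _ => A.smul_mem _ (hx i)
end

section
/- Let A be a linear relation in a complex vector space H. Then for every λ ∈ ℂ with λ ≠ 0 one has R_λ(A) = R_{λ⁻¹}(A⁻¹). -/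
/-!
The two root spaces agree level by level: with `μ = λ⁻¹`, one has
`ker (A - λ)ⁿ = ker (A⁻¹ - μ)ⁿ` for every `n`. By the symmetry `(A⁻¹)⁻¹ = A` only `≤` is needed, and
it is proved by induction on `n`. For `x ∈ ker (A - λ)ⁿ⁺¹` pick `x₁ ∈ ker (A - λ)ⁿ` with
`(x, x₁ + λ x) ∈ A`, hence `(μ x, μ x₁ + x) ∈ A`. By the induction hypothesis
`-μ x₁ ∈ ker (A⁻¹ - μ)ⁿ`, and this subspace contains, together with each of its elements `w`, some
`y` with `(y, w) ∈ A`. Adding `(y, -μ x₁) ∈ A` gives `(y + μ x, x) ∈ A`, that is,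
`(x, y) ∈ A⁻¹ - μ` with `y ∈ ker (A⁻¹ - μ)ⁿ`.
-/

open Submodule Set

variable {H : Type*} [AddCommGroup H] [Module ℂ H]

namespace LinRel

lemma mem_shift_s6 {A : LinRel H} {lam : ℂ} {x y : H} :
    (x, y) ∈ shift A lam ↔ (x, y + lam • x) ∈ A := by
  constructor
  · rintro ⟨⟨a, b⟩, hab, h⟩
    obtain ⟨rfl, rfl⟩ : a = x ∧ b - lam • a = y := by simpa using h
    simpa using hab
  · intro h
    exact ⟨_, h, by simp⟩

lemma mem_inv {A : LinRel H} {x y : H} : (x, y) ∈ inv A ↔ (y, x) ∈ A := by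
  constructor
  · rintro ⟨⟨a, b⟩, hab, h⟩
    obtain ⟨rfl, rfl⟩ : b = x ∧ a = y := by simpa using h
    exact hab
  · intro h
    exact ⟨_, h, by simp⟩

lemma inv_inv (A : LinRel H) : inv (inv A) = A := by
  ext ⟨x, y⟩
  rw [mem_inv, mem_inv]

/-- Powers are built by composing on the left; this peels off the first step of a chain instead. -/
lemma mem_pow_succ_iff {B : LinRel H} {n : ℕ} {x y : H} :
    (x, y) ∈ pow B (n + 1) ↔ ∃ z, (x, z) ∈ B ∧ (z, y) ∈ pow B n := by
  induction n generalizing y with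
  | zero =>
    change (∃ z, (x, z) ∈ idRel ∧ (z, y) ∈ B) ↔ ∃ z, (x, z) ∈ B ∧ (z, y) ∈ idRel
    simp [idRel, LinearMap.mem_graph_iff]
  | succ n ih =>
    constructor
    · rintro ⟨w, hw, hwy⟩
      obtain ⟨z, hxz, hzw⟩ := ih.1 hw
      exact ⟨z, hxz, w, hzw, hwy⟩
    · rintro ⟨z, hxz, w, hzw, hwy⟩
      exact ⟨w, ih.2 ⟨z, hxz, hzw⟩, hwy⟩

lemma mem_ker_pow_succ_iff {B : LinRel H} {n : ℕ} {x : H} :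
    x ∈ ker (pow B (n + 1)) ↔ ∃ z, (x, z) ∈ B ∧ z ∈ ker (pow B n) := by
  simp only [mem_ker, mem_pow_succ_iff]

/-- Each `w ∈ ker (A⁻¹ - μ)ⁿ` is related by `A⁻¹` to an element of the same kernel. -/
lemma exists_mem_of_mem_ker_pow_shift_inv {A : LinRel H} {mu : ℂ} {n : ℕ} {w : H}
    (hw : w ∈ ker (pow (shift (inv A) mu) n)) :
    ∃ y ∈ ker (pow (shift (inv A) mu) n), (y, w) ∈ A := by
  obtain ⟨z, hwz, hz⟩ := mem_ker_pow_succ_iff.1 (ker_pow_le_succ _ n hw)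
  exact ⟨z + mu • w, add_mem hz (Submodule.smul_mem _ mu hw), mem_inv.1 (mem_shift_s6.1 hwz)⟩

/-- The two root spaces are compared level by level; equality follows by replacing `A` with `A⁻¹`. -/
lemma ker_pow_shift_le (A : LinRel H) {lam : ℂ} (hlam : lam ≠ 0) (n : ℕ) :
    ker (pow (shift A lam) n) ≤ ker (pow (shift (inv A) lam⁻¹) n) := by
  induction n with
  | zero => exact le_rfl
  | succ n ih =>
    intro x hx
    obtain ⟨x₁, hxx₁, hx₁⟩ := mem_ker_pow_succ_iff.1 hx
    obtain ⟨y, hy, hyA⟩ :=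
      exists_mem_of_mem_ker_pow_shift_inv (Submodule.smul_mem _ (-lam⁻¹) (ih hx₁))
    refine mem_ker_pow_succ_iff.2 ⟨y, mem_shift_s6.2 (mem_inv.2 ?_), hy⟩
    simpa [smul_smul, hlam] using
      A.add_mem hyA (A.smul_mem lam⁻¹ (mem_shift_s6.1 hxx₁))

lemma rootSpace_le (A : LinRel H) {lam : ℂ} (hlam : lam ≠ 0) :
    rootSpace A lam ≤ rootSpace (inv A) lam⁻¹ := by
  intro x hx
  obtain ⟨i, hi⟩ := Set.mem_iUnion.1 hx
  exact Set.mem_iUnion.2 ⟨i, ker_pow_shift_le A hlam (i + 1) hi⟩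

end LinRel

/-- `R_λ(A) = R_{λ⁻¹}(A⁻¹)` for `λ ≠ 0`. -/
theorem statement_6 (A : LinRel H) (lam : ℂ) (hlam : lam ≠ 0) :
    LinRel.rootSpace A lam = LinRel.rootSpace (LinRel.inv A) lam⁻¹ := by
  refine le_antisymm (LinRel.rootSpace_le A hlam) ?_
  simpa [LinRel.inv_inv] using LinRel.rootSpace_le (LinRel.inv A) (inv_ne_zero hlam)
end
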